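/- For every nonnegative integer n, ped(9n + 7) ≡ ped(225n + 178) (mod 24). -/

import Mathlib

/-- `ped n` is the number of partitions of `n` in which the even parts are
distinct (and the odd parts are unrestricted). -/
def ped (n : ℕ) : ℕ :=
  Fintype.card {p : n.Partition // ∀ x ∈ p.parts, Even x → p.parts.count x ≤ 1}

open PowerSeries Finset

/-- The power series whose `n`-th coefficient counts the indices `i` with `f i = n`. -/
noncomputable def fiberSeries {ι : Type*} (f : ι → ℤ) : ℤ⟦X⟧ :=
  PowerSeries.mk fun n => ({i | f i = (n : ℤ)}.ncard : ℤ)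

theorem coeff_fiberSeries {ι : Type*} (f : ι → ℤ) (n : ℕ) :
    coeff n (fiberSeries f) = ({i | f i = (n : ℤ)}.ncard : ℤ) := coeff_mk _ _

theorem fiberSeries_mul {ι κ : Type*} {f : ι → ℤ} {g : κ → ℤ} (hf : ∀ i, 0 ≤ f i)
    (hg : ∀ i, 0 ≤ g i) (hf' : ∀ n : ℤ, {i | f i = n}.Finite)
    (hg' : ∀ n : ℤ, {i | g i = n}.Finite) :
    fiberSeries f * fiberSeries g = fiberSeries fun p : ι × κ => f p.1 + g p.2 := by
  ext n
  simp only [coeff_mul, coeff_fiberSeries]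
  classical
  have hfib : {p : ι × κ | f p.1 + g p.2 = (n : ℤ)} = ↑((HasAntidiagonal.antidiagonal n).biUnion
      fun a => (hf' a.1).toFinset ×ˢ (hg' a.2).toFinset) := by
    ext ⟨i, j⟩
    simp only [Set.mem_ofPred_eq, mem_coe, mem_biUnion, HasAntidiagonal.mem_antidiagonal,
      mem_product, Set.Finite.mem_toFinset, Prod.exists]
    have := hf i
    have := hg j
    constructor
    · intro h
      exact ⟨(f i).toNat, (g j).toNat, by omega, by omega, by omega⟩
    · rintro ⟨a, b, h, h1, h2⟩
      omega
  rw [hfib, Set.ncard_coe_finset, card_biUnion]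
  · push_cast
    refine sum_congr rfl fun a _ => ?_
    rw [card_product, Set.ncard_eq_toFinset_card _ (hf' a.1),
      Set.ncard_eq_toFinset_card _ (hg' a.2), Nat.cast_mul]
  · rintro ⟨a, b⟩ _ ⟨c, d⟩ _ hne
    rw [Function.onFun, disjoint_left]
    rintro ⟨i, j⟩ h h'
    simp only [mem_product, Set.Finite.mem_toFinset, Set.mem_ofPred_eq] at h h'
    exact hne (by ext <;> simp only <;> omega)

theorem expand_fiberSeries {ι : Type*} (f : ι → ℤ) (m : ℕ) (hm : m ≠ 0) :
    expand m hm (fiberSeries f) = fiberSeries fun i => m * f i := by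
  ext n
  rw [coeff_expand, coeff_fiberSeries]
  split_ifs with h
  · obtain ⟨k, rfl⟩ := h
    rw [Nat.mul_div_cancel_left _ (Nat.pos_of_ne_zero hm), coeff_fiberSeries]
    congr 2
    ext i
    rw [Set.mem_ofPred_eq, Set.mem_ofPred_eq, Nat.cast_mul]
    exact (mul_right_inj' (by exact_mod_cast hm)).symm
  · have : {i | (m : ℤ) * f i = n} = ∅ := by
      ext i
      simp only [Set.mem_ofPred_eq, Set.mem_empty_iff_false, iff_false]
      intro hi
      exact h (Int.natCast_dvd_natCast.mp ⟨_, hi.symm⟩)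
    rw [coeff_fiberSeries, this, Set.ncard_empty, Nat.cast_zero]

theorem coeff_sum_X_pow_eq_coeff_fiberSeries {ι : Type*} {f : ι → ℤ} (hf : ∀ i, 0 ≤ f i)
    (s : Finset ι) (n : ℕ) (hs : ∀ i, f i = n → i ∈ s) :
    coeff n (∑ i ∈ s, (X : ℤ⟦X⟧) ^ (f i).toNat) = coeff n (fiberSeries f) := by
  classical
  rw [coeff_fiberSeries, map_sum]
  simp only [coeff_X_pow]
  rw [sum_boole, ← Set.ncard_coe_finset]
  congr 2
  ext i
  have := hf i
  simp only [coe_filter, Set.mem_ofPred_eq]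
  constructor
  · rintro ⟨_, h⟩
    omega
  · intro h
    exact ⟨hs i h, by omega⟩

/-- Ramanujan's theta function `φ(q) = ∑ q ^ (k ^ 2)`. -/
noncomputable def squareTheta : ℤ⟦X⟧ := fiberSeries fun k : ℤ => k ^ 2

/-- Ramanujan's theta function `ψ(q) = ∑ q ^ (k (2 k + 1))`, summed over all integers `k`. -/
noncomputable def triangularTheta : ℤ⟦X⟧ := fiberSeries fun k : ℤ => 2 * k ^ 2 + k

theorem two_mul_sq_add_self_nonneg (k : ℤ) : 0 ≤ 2 * k ^ 2 + k := by
  rcases le_or_gt 0 k with h | h <;> nlinarith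

theorem sq_fiber_finite (n : ℤ) : {k : ℤ | k ^ 2 = n}.Finite := by
  refine (Set.finite_Icc (-n) n).subset fun k (hk : k ^ 2 = n) => ?_
  rcases lt_trichotomy k 0 with h | h | h <;> constructor <;> nlinarith

theorem two_mul_sq_add_self_fiber_finite (n : ℤ) : {k : ℤ | 2 * k ^ 2 + k = n}.Finite := by
  refine (Set.finite_Icc (-n) n).subset fun k (hk : 2 * k ^ 2 + k = n) => ?_
  rcases lt_trichotomy k 0 with h | h | h <;> constructor <;> nlinarith

theorem triangularTheta_mul_squareTheta : triangularTheta * squareTheta =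
    fiberSeries fun p : ℤ × ℤ => (2 * p.1 ^ 2 + p.1) + p.2 ^ 2 :=
  fiberSeries_mul two_mul_sq_add_self_nonneg (fun k => sq_nonneg k)
    two_mul_sq_add_self_fiber_finite sq_fiber_finite

theorem triangularTheta_sq : triangularTheta ^ 2 =
    fiberSeries fun p : ℤ × ℤ => (2 * p.1 ^ 2 + p.1) + (2 * p.2 ^ 2 + p.2) := by
  rw [sq]
  exact fiberSeries_mul two_mul_sq_add_self_nonneg two_mul_sq_add_self_nonneg
    two_mul_sq_add_self_fiber_finite two_mul_sq_add_self_fiber_finite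

theorem mul_fiber_finite {f : ℤ → ℤ} (hf : ∀ n : ℤ, {k | f k = n}.Finite) {m : ℕ} (hm : m ≠ 0)
    (n : ℤ) : {k | m * f k = n}.Finite := by
  refine (hf (n / m)).subset fun k (hk : m * f k = n) => ?_
  rw [Set.mem_ofPred_eq, ← hk, Int.mul_ediv_cancel_left _ (by exact_mod_cast hm)]

theorem squareTheta_mul_expand_triangularTheta :
    squareTheta * expand 2 two_ne_zero triangularTheta =
      fiberSeries fun p : ℤ × ℤ => p.1 ^ 2 + 2 * (2 * p.2 ^ 2 + p.2) := by
  rw [triangularTheta, expand_fiberSeries]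
  exact fiberSeries_mul (fun k => sq_nonneg k)
    (fun k => mul_nonneg (by norm_num) (two_mul_sq_add_self_nonneg k)) sq_fiber_finite
    (mul_fiber_finite two_mul_sq_add_self_fiber_finite two_ne_zero)

theorem triangularTheta_mul_expand_triangularTheta :
    triangularTheta * expand 2 two_ne_zero triangularTheta =
      fiberSeries fun p : ℤ × ℤ => (2 * p.1 ^ 2 + p.1) + 2 * (2 * p.2 ^ 2 + p.2) := by
  conv_lhs => rw [triangularTheta, expand_fiberSeries]
  exact fiberSeries_mul two_mul_sq_add_self_nonneg
    (fun k => mul_nonneg (by norm_num) (two_mul_sq_add_self_nonneg k))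
    two_mul_sq_add_self_fiber_finite
    (mul_fiber_finite two_mul_sq_add_self_fiber_finite two_ne_zero)

theorem triangularTheta_sq_eq :
    triangularTheta ^ 2 = squareTheta * expand 2 two_ne_zero triangularTheta := by
  rw [triangularTheta_sq, squareTheta_mul_expand_triangularTheta]
  ext n
  rw [coeff_fiberSeries, coeff_fiberSeries]
  congr 1
  symm
  refine Set.ncard_congr (fun p _ => if p.1 % 2 = 0 then (p.2 + p.1 / 2, p.2 - p.1 / 2)
    else ((p.1 - 1) / 2 - p.2, -1 - p.2 - (p.1 - 1) / 2)) ?_ ?_ ?_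
  · rintro ⟨l, k⟩ h
    simp only [Set.mem_ofPred_eq] at h ⊢
    rw [← h]
    rcases Int.even_or_odd' l with ⟨p, rfl | rfl⟩
    · rw [if_pos (by omega), show 2 * p / 2 = p by omega]
      ring
    · rw [if_neg (by omega), show (2 * p + 1 - 1) / 2 = p by omega]
      ring
  · rintro ⟨l, k⟩ ⟨l', k'⟩ _ _ h
    simp only at h
    split_ifs at h <;> simp only [Prod.mk.injEq] at h ⊢ <;> omega
  · rintro ⟨j, k⟩ h
    simp only [Set.mem_ofPred_eq] at h
    rcases Int.even_or_odd' (j + k) with ⟨p, hp | hp⟩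
    · obtain rfl : j = 2 * p - k := by omega
      refine ⟨(2 * (p - k), p), ?_, ?_⟩
      · simp only [Set.mem_ofPred_eq]
        rw [← h]
        ring
      · rw [if_pos (by simp only; omega)]
        simp only [Prod.mk.injEq]
        omega
    · obtain rfl : j = 2 * p + 1 - k := by omega
      refine ⟨(2 * (p - k) + 1, -1 - p), ?_, ?_⟩
      · simp only [Set.mem_ofPred_eq]
        rw [← h]
        ring
      · rw [if_neg (by simp only; omega)]
        simp only [Prod.mk.injEq]
        omega

theorem coeff_triangularTheta_mul_expand_dilate (n : ℕ) :
    coeff (25 * n + 9) (triangularTheta * expand 2 two_ne_zero triangularTheta) =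
      coeff n (triangularTheta * expand 2 two_ne_zero triangularTheta) := by
  rw [triangularTheta_mul_expand_triangularTheta, coeff_fiberSeries, coeff_fiberSeries]
  have hinj : Function.Injective fun p : ℤ × ℤ => (5 * p.1 + 1, 5 * p.2 + 1) := by
    rintro ⟨a, b⟩ ⟨c, d⟩ h
    simp only [Prod.mk.injEq] at h ⊢
    omega
  rw [← Set.ncard_image_of_injective
    {p : ℤ × ℤ | 2 * p.1 ^ 2 + p.1 + 2 * (2 * p.2 ^ 2 + p.2) = (n : ℤ)} hinj]
  congr 2
  ext ⟨u, v⟩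
  simp only [Set.mem_ofPred_eq, Set.mem_image, Prod.mk.injEq, Prod.exists]
  push_cast
  constructor
  · intro h
    have h5 : ((4 * u + 1) ^ 2 + 2 * (4 * v + 1) ^ 2) % 5 = 0 := by
      have : (4 * u + 1) ^ 2 + 2 * (4 * v + 1) ^ 2 = 25 * (8 * n + 3) := by linarith
      omega
    have key : (4 * u + 1) % 5 = 0 ∧ (4 * v + 1) % 5 = 0 := by
      generalize 4 * u + 1 = x at *
      generalize 4 * v + 1 = y at *
      have hx : x % 5 = 0 ∨ x % 5 = 1 ∨ x % 5 = 2 ∨ x % 5 = 3 ∨ x % 5 = 4 := by omega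
      have hy : y % 5 = 0 ∨ y % 5 = 1 ∨ y % 5 = 2 ∨ y % 5 = 3 ∨ y % 5 = 4 := by omega
      rcases hx with hx | hx | hx | hx | hx <;> rcases hy with hy | hy | hy | hy | hy <;>
        simp [pow_two, Int.add_emod, Int.mul_emod, hx, hy] at h5 ⊢
    obtain ⟨a, rfl⟩ : ∃ a, u = 5 * a + 1 := ⟨(u - 1) / 5, by omega⟩
    obtain ⟨b, rfl⟩ : ∃ b, v = 5 * b + 1 := ⟨(v - 1) / 5, by omega⟩
    exact ⟨a, b, by linarith, rfl, rfl⟩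
  · rintro ⟨a, b, h, rfl, rfl⟩
    linarith

theorem coeff_triangularTheta_mul_squareTheta (n : ℕ) :
    coeff (3 * n + 1) (triangularTheta * squareTheta) +
      coeff n (expand 3 three_ne_zero (triangularTheta * squareTheta)) =
    4 * coeff n (triangularTheta * expand 2 two_ne_zero triangularTheta) := by
  have hfin : {p : ℤ × ℤ | 2 * p.1 ^ 2 + p.1 + p.2 ^ 2 = ((3 * n + 1 : ℕ) : ℤ)}.Finite := by
    refine (Set.finite_Icc (-(3 * n + 1 : ℤ), -(3 * n + 1 : ℤ)) (3 * n + 1, 3 * n + 1)).subset ?_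
    rintro ⟨j, k⟩ h
    simp only [Set.mem_ofPred_eq] at h
    push_cast at h
    simp only [Set.mem_Icc, Prod.mk_le_mk]
    have := two_mul_sq_add_self_nonneg j
    refine ⟨⟨?_, ?_⟩, ?_, ?_⟩
    · nlinarith
    · nlinarith
    · rcases lt_trichotomy j 0 with h | h | h <;> nlinarith
    · nlinarith
  rw [triangularTheta_mul_squareTheta, triangularTheta_mul_expand_triangularTheta,
    expand_fiberSeries, coeff_fiberSeries, coeff_fiberSeries, coeff_fiberSeries]
  set A := {p : ℤ × ℤ | 2 * p.1 ^ 2 + p.1 + p.2 ^ 2 = ((3 * n + 1 : ℕ) : ℤ)} with hA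
  set S := {p : ℤ × ℤ | 2 * p.1 ^ 2 + p.1 + 2 * (2 * p.2 ^ 2 + p.2) = (n : ℤ)} with hS
  set B := {p : ℤ × ℤ | ((3 : ℕ) : ℤ) * (2 * p.1 ^ 2 + p.1 + p.2 ^ 2) = (n : ℤ)} with hB
  have hmem : ∀ p ∈ A, ∃ c, (4 * p.1 + 1) ^ 2 + 8 * p.2 ^ 2 = 3 * c := by
    rintro ⟨j, k⟩ h
    simp only [hA, Set.mem_ofPred_eq] at h
    push_cast at h
    exact ⟨8 * n + 3, by simp only; linarith⟩
  let P := A ∩ {p | (4 * p.1 + 1 + p.2) % 3 = 0}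
  let M := A ∩ {p | (4 * p.1 + 1 - p.2) % 3 = 0}
  have hunion : P ∪ M = A := by
    ext ⟨j, k⟩
    simp only [P, M, Set.mem_union, Set.mem_inter_iff, Set.mem_ofPred_eq, ← and_or_left,
      and_iff_left_iff_imp]
    intro h
    obtain ⟨c, hc⟩ := hmem _ h
    simp only at hc
    have h3 : ((4 * j + 1 + k) * (4 * j + 1 - k)) % 3 = 0 := by
      have : (4 * j + 1 + k) * (4 * j + 1 - k) = 3 * (c - 3 * k ^ 2) := by linarith
      omega
    rw [← Int.dvd_iff_emod_eq_zero] at *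
    rw [← Int.dvd_iff_emod_eq_zero]
    exact Int.prime_three.dvd_or_dvd h3
  have hinter : (P ∩ M).ncard = B.ncard := by
    have hinj : Function.Injective fun p : ℤ × ℤ => (-3 * p.1 - 1, 3 * p.2) := by
      rintro ⟨a, b⟩ ⟨c, d⟩ h
      simp only [Prod.mk.injEq] at h ⊢
      omega
    rw [← Set.ncard_image_of_injective B hinj]
    congr 1
    ext ⟨j, k⟩
    simp only [P, M, hA, hB, Set.mem_inter_iff, Set.mem_ofPred_eq, Set.mem_image, Prod.mk.injEq,
      Prod.exists]
    push_cast
    constructor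
    · rintro ⟨⟨h, h1⟩, -, h2⟩
      obtain ⟨a, rfl⟩ : ∃ a, j = -3 * a - 1 := ⟨-(j + 1) / 3, by omega⟩
      obtain ⟨b, rfl⟩ : ∃ b, k = 3 * b := ⟨k / 3, by omega⟩
      exact ⟨a, b, by linarith, rfl, rfl⟩
    · rintro ⟨a, b, h, rfl, rfl⟩
      refine ⟨⟨?_, by omega⟩, ?_, by omega⟩ <;> linarith
  have himage : ∀ f g : ℤ × ℤ → ℤ × ℤ, Function.Injective f → Function.Injective g →
      (∀ p, Even (f p).2) → (∀ p, Odd (g p).2) →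
      (Set.image f S ∪ Set.image g S).ncard = 2 * S.ncard := by
    intro f g hf hg hfe hgo
    by_cases hSfin : S.Finite
    · rw [Set.ncard_union_eq _ (hSfin.image f) (hSfin.image g), Set.ncard_image_of_injective _ hf,
        Set.ncard_image_of_injective _ hg, two_mul]
      rw [Set.disjoint_left]
      rintro _ ⟨p, _, rfl⟩ ⟨q, _, hq⟩
      exact Int.not_even_iff_odd.mpr (hgo q) (hq ▸ hfe p)
    · rw [Set.Infinite.ncard, Set.Infinite.ncard hSfin]
      exact (Set.Infinite.image hf.injOn hSfin).mono Set.subset_union_left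
  have hP : P.ncard = 2 * S.ncard := by
    rw [← himage (fun p => (-p.1 - 2 * p.2 - 1, 2 * (p.2 - p.1)))
      (fun p => (2 * p.2 - p.1, 2 * (-p.1 - p.2 - 1) + 1))]
    · congr 1
      ext ⟨j, k⟩
      simp only [P, hA, hS, Set.mem_inter_iff, Set.mem_ofPred_eq, Set.mem_image, Prod.mk.injEq,
        Prod.exists, Set.mem_union]
      push_cast
      constructor
      · rintro ⟨h, h1⟩
        rcases Int.even_or_odd' k with ⟨m, rfl | rfl⟩
        · obtain ⟨a, ha⟩ : ∃ a, -j - 1 - 2 * m = 3 * a := ⟨(-j - 1 - 2 * m) / 3, by omega⟩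
          obtain rfl : j = -a - 2 * (m + a) - 1 := by omega
          exact Or.inl ⟨a, m + a, by linarith, rfl, by omega⟩
        · obtain ⟨a, ha⟩ : ∃ a, -j - 2 - 2 * m = 3 * a := ⟨(-j - 2 - 2 * m) / 3, by omega⟩
          obtain rfl : j = 2 * (-m - 1 - a) - a := by omega
          exact Or.inr ⟨a, -m - 1 - a, by linarith, rfl, by omega⟩
      · rintro (⟨a, b, h, rfl, rfl⟩ | ⟨a, b, h, rfl, rfl⟩)
        · exact ⟨by linarith, by omega⟩
        · exact ⟨by linarith, by omega⟩
    · rintro ⟨a, b⟩ ⟨c, d⟩ h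
      simp only [Prod.mk.injEq] at h ⊢
      omega
    · rintro ⟨a, b⟩ ⟨c, d⟩ h
      simp only [Prod.mk.injEq] at h ⊢
      omega
    · exact fun p => even_two_mul _
    · exact fun p => odd_two_mul_add_one _
  have hM : M.ncard = P.ncard := by
    have hinj : Function.Injective fun p : ℤ × ℤ => (p.1, -p.2) := by
      rintro ⟨a, b⟩ ⟨c, d⟩ h
      simp only [Prod.mk.injEq] at h ⊢
      omega
    rw [← Set.ncard_image_of_injective P hinj]
    congr 1
    ext ⟨j, k⟩
    simp only [P, M, hA, Set.mem_inter_iff, Set.mem_ofPred_eq, Set.mem_image, Prod.mk.injEq,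
      Prod.exists]
    constructor
    · rintro ⟨h, h1⟩
      exact ⟨j, -k, ⟨by linarith, by omega⟩, rfl, by ring⟩
    · rintro ⟨a, b, ⟨h, h1⟩, rfl, rfl⟩
      exact ⟨by linarith, by omega⟩
  have hcard := Set.ncard_union_add_ncard_inter P M (hfin.subset Set.inter_subset_left)
    (hfin.subset Set.inter_subset_left)
  rw [hunion, hinter, hM, hP] at hcard
  zify at hcard
  linarith

theorem coeff_expand_mul_eq {R : Type*} [CommRing R] {m : ℕ} (hm : m ≠ 0) {r : ℕ} (hr : r < m)
    (f g : R⟦X⟧) (n : ℕ) :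
    coeff (m * n + r) (expand m hm f * g) =
      coeff n (f * PowerSeries.mk fun k => coeff (m * k + r) g) := by
  rw [coeff_mul, coeff_mul]
  symm
  refine sum_of_injOn (fun a => (m * a.1, m * a.2 + r)) ?_ ?_ ?_ ?_
  · rintro ⟨a, b⟩ _ ⟨c, d⟩ _ h
    simp only [Prod.mk.injEq, add_left_inj, mul_right_inj' hm] at h
    exact Prod.ext h.1 h.2
  · rintro ⟨a, b⟩ h
    simp only [mem_coe, HasAntidiagonal.mem_antidiagonal] at h ⊢
    rw [← h]
    ring
  · rintro ⟨a, b⟩ h h'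
    rw [coeff_expand, if_neg, zero_mul]
    rintro ⟨c, hc⟩
    simp only [HasAntidiagonal.mem_antidiagonal] at h hc
    subst hc
    have hb : b % m = r := by
      have := congrArg (· % m) h
      simpa [Nat.mod_eq_of_lt hr] using this
    refine h' ⟨(c, b / m), ?_, ?_⟩
    · simp only [mem_coe, HasAntidiagonal.mem_antidiagonal]
      rw [← Nat.div_add_mod b m, hb, ← add_assoc, ← mul_add, Nat.add_right_cancel_iff] at h
      exact Nat.eq_of_mul_eq_mul_left (Nat.pos_of_ne_zero hm) h
    · simp only [Prod.mk.injEq, true_and]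
      rw [← hb, Nat.div_add_mod]
  · rintro ⟨a, b⟩ _
    rw [coeff_expand_mul, coeff_mk]

theorem coeff_triangularTheta_three_mul_add_one (n : ℕ) :
    coeff (3 * n + 1) triangularTheta = coeff n (expand 3 three_ne_zero triangularTheta) := by
  rw [triangularTheta, expand_fiberSeries, coeff_fiberSeries, coeff_fiberSeries]
  have hinj : Function.Injective fun k : ℤ => -3 * k - 1 := fun a b h => by
    simp only at h
    omega
  rw [← Set.ncard_image_of_injective {k : ℤ | ((3 : ℕ) : ℤ) * (2 * k ^ 2 + k) = (n : ℤ)} hinj]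
  congr 2
  ext k
  simp only [Set.mem_ofPred_eq, Set.mem_image]
  push_cast
  constructor
  · intro h
    have hk : k % 3 = 2 := by
      have hx : k % 3 = 0 ∨ k % 3 = 1 ∨ k % 3 = 2 := by omega
      have h3 : (2 * k ^ 2 + k) % 3 = 1 := by omega
      rcases hx with hx | hx | hx <;>
        simp [pow_two, Int.add_emod, Int.mul_emod, hx] at h3 ⊢
    obtain ⟨a, rfl⟩ : ∃ a, k = -3 * a - 1 := ⟨-(k + 1) / 3, by omega⟩
    exact ⟨a, by linarith, rfl⟩
  · rintro ⟨a, h, rfl⟩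
    linarith

theorem coeff_triangularTheta_eq_zero {n : ℕ} (hn : n % 3 = 2) : coeff n triangularTheta = 0 := by
  rw [triangularTheta, coeff_fiberSeries, Nat.cast_eq_zero]
  convert Set.ncard_empty ℤ
  ext k
  simp only [Set.mem_ofPred_eq, Set.mem_empty_iff_false, iff_false]
  intro h
  have hx : k % 3 = 0 ∨ k % 3 = 1 ∨ k % 3 = 2 := by omega
  have h3 : (2 * k ^ 2 + k) % 3 = 2 := by omega
  rcases hx with hx | hx | hx <;> simp [pow_two, Int.add_emod, Int.mul_emod, hx] at h3

theorem coeff_squareTheta_eq_zero {n : ℕ} (hn : n % 3 = 2) : coeff n squareTheta = 0 := by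
  rw [squareTheta, coeff_fiberSeries, Nat.cast_eq_zero]
  convert Set.ncard_empty ℤ
  ext k
  simp only [Set.mem_ofPred_eq, Set.mem_empty_iff_false, iff_false]
  intro h
  have hx : k % 3 = 0 ∨ k % 3 = 1 ∨ k % 3 = 2 := by omega
  have h3 : (k ^ 2) % 3 = 2 := by omega
  rcases hx with hx | hx | hx <;> simp [pow_two, Int.mul_emod, hx] at h3

theorem coeff_squareTheta_eq_coeff_expand {n : ℕ} (hn : n % 3 ≠ 1) :
    coeff n squareTheta =
      coeff n (expand 3 three_ne_zero (expand 3 three_ne_zero squareTheta)) := by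
  rw [squareTheta, expand_fiberSeries, expand_fiberSeries, coeff_fiberSeries, coeff_fiberSeries]
  have hinj : Function.Injective fun k : ℤ => 3 * k := fun a b h => by
    simp only at h
    omega
  rw [← Set.ncard_image_of_injective
    {k : ℤ | ((3 : ℕ) : ℤ) * (((3 : ℕ) : ℤ) * k ^ 2) = (n : ℤ)} hinj]
  congr 2
  ext k
  simp only [Set.mem_ofPred_eq, Set.mem_image]
  push_cast
  constructor
  · intro h
    have hk : k % 3 = 0 := by
      have hx : k % 3 = 0 ∨ k % 3 = 1 ∨ k % 3 = 2 := by omega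
      have h3 : (k ^ 2) % 3 ≠ 1 := by omega
      rcases hx with hx | hx | hx <;>
        simp [pow_two, Int.mul_emod, hx] at h3 ⊢
    obtain ⟨a, rfl⟩ : ∃ a, k = 3 * a := ⟨k / 3, by omega⟩
    exact ⟨a, by linarith, rfl⟩
  · rintro ⟨a, h, rfl⟩
    linarith

theorem coeff_mul_eq_zero_of_mod_three {f g : ℤ⟦X⟧} (hf : ∀ n, n % 3 = 2 → coeff n f = 0)
    (hg : ∀ n, n % 3 ≠ 1 → coeff n g = 0) {n : ℕ} (hn : n % 3 = 1) :
    coeff n (f * g ^ 2) = 0 := by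
  rw [coeff_mul]
  refine sum_eq_zero fun a ha => ?_
  rw [HasAntidiagonal.mem_antidiagonal] at ha
  by_cases h1 : a.1 % 3 = 2
  · rw [hf _ h1, zero_mul]
  rw [sq, coeff_mul, sum_eq_zero, mul_zero]
  intro b hb
  rw [HasAntidiagonal.mem_antidiagonal] at hb
  by_cases h2 : b.1 % 3 = 1
  · rw [hg b.2 (by omega), mul_zero]
  · rw [hg _ h2, zero_mul]

theorem coeff_triangularTheta_mul_squareTheta_sq (n : ℕ) :
    coeff (3 * n + 1) (triangularTheta * squareTheta ^ 2) =
      coeff n (8 * (expand 3 three_ne_zero squareTheta *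
        (triangularTheta * expand 2 two_ne_zero triangularTheta)) -
        3 * expand 3 three_ne_zero (squareTheta ^ 2 * triangularTheta)) := by
  have h0 : coeff (3 * n + 1) (triangularTheta * (squareTheta -
      expand 3 three_ne_zero (expand 3 three_ne_zero squareTheta)) ^ 2) = 0 := by
    refine coeff_mul_eq_zero_of_mod_three (fun _ h => coeff_triangularTheta_eq_zero h)
      (fun k hk => ?_) (by omega)
    rw [map_sub, coeff_squareTheta_eq_coeff_expand hk, sub_self]
  have hE : (PowerSeries.mk fun k => coeff (3 * k + 1) (triangularTheta * squareTheta)) =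
      4 * (triangularTheta * expand 2 two_ne_zero triangularTheta) -
        expand 3 three_ne_zero (triangularTheta * squareTheta) := by
    ext k
    rw [coeff_mk, map_sub, eq_sub_iff_add_eq, coeff_triangularTheta_mul_squareTheta,
      ← map_ofNat C 4, coeff_C_mul]
  have hT : (PowerSeries.mk fun k => coeff (3 * k + 1) triangularTheta) =
      expand 3 three_ne_zero triangularTheta := by
    ext k
    rw [coeff_mk, coeff_triangularTheta_three_mul_add_one]
  have h1 := coeff_expand_mul_eq three_ne_zero (show 1 < 3 by norm_num)
    (expand 3 three_ne_zero squareTheta) (triangularTheta * squareTheta) n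
  have h2 := coeff_expand_mul_eq three_ne_zero (show 1 < 3 by norm_num)
    (expand 3 three_ne_zero squareTheta ^ 2) triangularTheta n
  rw [hE] at h1
  rw [hT] at h2
  have h3 : triangularTheta * squareTheta ^ 2 = triangularTheta * (squareTheta -
      expand 3 three_ne_zero (expand 3 three_ne_zero squareTheta)) ^ 2 +
      (expand 3 three_ne_zero (expand 3 three_ne_zero squareTheta) *
        (triangularTheta * squareTheta) +
      expand 3 three_ne_zero (expand 3 three_ne_zero squareTheta) *
        (triangularTheta * squareTheta)) -
      expand 3 three_ne_zero (expand 3 three_ne_zero squareTheta ^ 2) * triangularTheta := by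
    rw [map_pow]
    ring
  rw [h3, map_sub, map_add, map_add, h0, h1, h2, zero_add, ← map_add, ← map_sub, map_mul, map_mul,
    map_pow]
  congr 1
  ring

theorem coeff_zero_squareTheta : coeff 0 squareTheta = 1 := by
  rw [squareTheta, coeff_fiberSeries]
  have : {k : ℤ | k ^ 2 = ((0 : ℕ) : ℤ)} = {0} := by
    ext k
    simp
  rw [this, Set.ncard_singleton, Nat.cast_one]

theorem exists_squareTheta_eq : ∃ S : ℤ⟦X⟧, squareTheta = 1 + 2 * S := by
  have h : ∀ n, ∃ c : ℤ, coeff n squareTheta = coeff n (1 : ℤ⟦X⟧) + 2 * c := by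
    intro n
    rw [coeff_one]
    split_ifs with hn
    · exact ⟨0, by rw [hn, coeff_zero_squareTheta]; norm_num⟩
    · rw [squareTheta, coeff_fiberSeries]
      by_cases hk : ∃ k : ℤ, k ^ 2 = n
      · obtain ⟨k, hk⟩ := hk
        have : {l : ℤ | l ^ 2 = (n : ℤ)} = {k, -k} := by
          ext l
          rw [Set.mem_ofPred_eq, ← hk, sq_eq_sq_iff_eq_or_eq_neg]
          rfl
        have hne : k ≠ -k := by
          intro h
          have : k = 0 := by omega
          subst this
          exact hn (by exact_mod_cast hk.symm)
        exact ⟨1, by rw [this, Set.ncard_pair hne]; norm_num⟩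
      · have : {l : ℤ | l ^ 2 = (n : ℤ)} = ∅ := by
          ext l
          simpa using fun h => hk ⟨l, h⟩
        exact ⟨0, by rw [this, Set.ncard_empty]; norm_num⟩
  choose c hc using h
  refine ⟨PowerSeries.mk c, ?_⟩
  ext n
  rw [map_add, hc, ← map_ofNat C 2, coeff_C_mul, coeff_mk]

theorem coeff_expand_three_eq_zero {R : Type*} [CommRing R] (f : R⟦X⟧) (n : ℕ) :
    coeff (3 * n + 2) (expand 3 three_ne_zero f) = 0 :=
  coeff_expand_of_not_dvd 3 three_ne_zero f (by omega)

theorem exists_coeff_eq_of_mul_squareTheta {Q : ℤ⟦X⟧} (hQ : Q * squareTheta = triangularTheta)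
    (n : ℕ) : ∃ c : ℤ, coeff (9 * n + 7) Q =
      -12 * coeff (3 * n + 2) (triangularTheta * expand 2 two_ne_zero triangularTheta) +
        8 * c := by
  obtain ⟨S, hS⟩ := exists_squareTheta_eq
  have h : Q = triangularTheta + triangularTheta + triangularTheta - (triangularTheta * squareTheta
      + triangularTheta * squareTheta + triangularTheta * squareTheta) +
      triangularTheta * squareTheta ^ 2 + C (-8) * (Q * S ^ 3) := by
    rw [← hQ, hS, map_neg, map_ofNat]
    ring
  have h1 := coeff_triangularTheta_three_mul_add_one (3 * n + 2)
  have h2 := coeff_triangularTheta_mul_squareTheta (3 * n + 2)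
  have h3 := coeff_triangularTheta_mul_squareTheta_sq (3 * n + 2)
  rw [map_sub, ← map_ofNat C 8, ← map_ofNat C 3, coeff_C_mul, coeff_C_mul,
    coeff_expand_three_eq_zero] at h3
  rw [coeff_expand_three_eq_zero] at h1 h2
  have h4 := congrArg (coeff (3 * (3 * n + 2) + 1)) h
  simp only [map_add, map_sub, coeff_C_mul, h1, h3] at h4
  rw [show 9 * n + 7 = 3 * (3 * n + 2) + 1 by ring, h4]
  refine ⟨coeff (3 * n + 2) (expand 3 three_ne_zero squareTheta *
    (triangularTheta * expand 2 two_ne_zero triangularTheta)) -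
      coeff (3 * (3 * n + 2) + 1) (Q * S ^ 3), ?_⟩
  linear_combination -3 * h2

theorem expand_zmod_eq_pow (p : ℕ) [hp : Fact p.Prime] (f : (ZMod p)⟦X⟧) :
    expand p hp.out.ne_zero f = f ^ p := by
  have h := MvPowerSeries.map_frobenius_expand p hp.out.ne_zero (f := f)
  rwa [ZMod.frobenius_zmod, MvPowerSeries.map_id] at h

theorem three_dvd_coeff_of_mul_squareTheta {Q : ℤ⟦X⟧} (hQ : Q * squareTheta = triangularTheta)
    (n : ℕ) : 3 ∣ coeff (9 * n + 7) Q := by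
  have : Fact (Nat.Prime 3) := ⟨Nat.prime_three⟩
  let ρ := PowerSeries.map (Int.castRingHom (ZMod 3))
  have hexp : ∀ f, ρ (expand 3 three_ne_zero f) = ρ f ^ 3 := fun f => by
    rw [map_expand, expand_zmod_eq_pow]
  have hne : ρ squareTheta ≠ 0 := by
    intro h
    have h0 := congrArg (coeff 0) h
    rw [coeff_map, coeff_zero_squareTheta, map_one, map_zero] at h0
    exact one_ne_zero h0
  have hφ : expand 3 three_ne_zero (ρ squareTheta) * ρ Q =
      ρ (triangularTheta * squareTheta ^ 2) := by
    rw [expand_zmod_eq_pow, ← hQ]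
    simp only [map_mul, map_pow]
    ring
  have hU : ρ squareTheta * (PowerSeries.mk fun k => coeff (3 * k + 1) (ρ Q)) =
      ρ squareTheta * (expand 3 three_ne_zero (ρ triangularTheta) * (ρ (2 * squareTheta))) := by
    ext k
    rw [← coeff_expand_mul_eq three_ne_zero (show 1 < 3 by norm_num), hφ, coeff_map,
      coeff_triangularTheta_mul_squareTheta_sq, ← coeff_map]
    congr 1
    have h3 : (3 : (ZMod 3)⟦X⟧) = 0 := by
      rw [← map_ofNat C 3, show (OfNat.ofNat 3 : ZMod 3) = 0 from rfl, map_zero]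
    have hsq := congrArg ρ triangularTheta_sq_eq
    simp only [map_mul, map_pow] at hsq
    change ρ _ = _
    rw [map_sub, map_mul ρ 3, map_ofNat, h3, zero_mul, sub_zero, expand_zmod_eq_pow]
    simp only [map_mul, hexp, map_ofNat]
    linear_combination 2 * ρ squareTheta ^ 3 * ρ triangularTheta *
      ρ (expand 2 two_ne_zero triangularTheta) * h3 -
        2 * ρ squareTheta ^ 2 * ρ triangularTheta * hsq
  have h := congrArg (coeff (3 * n + 2)) (mul_left_cancel₀ hne hU)
  rw [coeff_expand_mul_eq three_ne_zero (show 2 < 3 by norm_num), coeff_mk, coeff_map] at h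
  have h0 : (PowerSeries.mk fun k => coeff (3 * k + 2) (ρ (2 * squareTheta))) = 0 := by
    ext k
    rw [coeff_mk, coeff_map, ← map_ofNat C 2, coeff_C_mul, coeff_squareTheta_eq_zero (by omega),
      mul_zero, map_zero, map_zero]
  rw [h0, mul_zero, map_zero, show 3 * (3 * n + 2) + 1 = 9 * n + 7 by ring, eq_intCast] at h
  exact (ZMod.intCast_zmod_eq_zero_iff_dvd _ 3).mp h

theorem gauss_square_finite {A : Type*} [CommRing A] (x : A) (u : ℕ → A)
    (hu : ∀ k, u (k + 1) * (1 + x ^ (k + 1)) = 1) (n : ℕ) :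
    1 + 2 * ∑ s ∈ range n, (-1) ^ (s + 1) * x ^ ((s + 1) ^ 2) =
      ∏ k ∈ Ico 0 n, ((1 - x ^ (k + 1)) * u (k + 1)) +
      2 * ∑ s ∈ range n, (-1) ^ (s + 1) * x ^ ((s + 1) * (n + 1)) * u (s + 1) *
        ∏ k ∈ Ico (s + 1) n, ((1 - x ^ (k + 1)) * u (k + 1)) := by
  induction n with
  | zero => simp
  | succ n ih =>
    have key : ∀ t ≤ n, ∑ s ∈ range t, (-1) ^ (s + 1) * x ^ ((s + 1) * (n + 1 + 1)) * u (s + 1) *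
          ∏ k ∈ Ico (s + 1) (n + 1), ((1 - x ^ (k + 1)) * u (k + 1)) =
        ∑ s ∈ range t, (-1) ^ (s + 1) * x ^ ((s + 1) * (n + 1)) * u (s + 1) *
          ∏ k ∈ Ico (s + 1) n, ((1 - x ^ (k + 1)) * u (k + 1)) +
        x ^ (n + 1) * u (n + 1) * ∏ k ∈ Ico 0 n, ((1 - x ^ (k + 1)) * u (k + 1)) -
        (-1) ^ t * x ^ ((t + 1) * (n + 1)) * u (n + 1) *
          ∏ k ∈ Ico t n, ((1 - x ^ (k + 1)) * u (k + 1)) := by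
      intro t ht
      induction t with
      | zero => simp
      | succ t iht =>
        rw [sum_range_succ, sum_range_succ, iht (by omega), prod_Ico_succ_top ht,
          prod_eq_prod_Ico_succ_bot (show t < n by omega)]
        generalize ∏ k ∈ Ico (t + 1) n, ((1 - x ^ (k + 1)) * u (k + 1)) = p
        have h1 := hu t
        have h2 := hu n
        rw [show x ^ ((t + 1) * (n + 1 + 1)) = x ^ ((t + 1) * (n + 1)) * x ^ (t + 1) by ring,
          show x ^ ((t + 1 + 1) * (n + 1)) = x ^ ((t + 1) * (n + 1)) * x ^ (n + 1) by ring,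
          pow_succ (-1) t]
        generalize x ^ ((t + 1) * (n + 1)) = z at *
        generalize x ^ (t + 1) = y at *
        generalize x ^ (n + 1) = w at *
        generalize u (n + 1) = a at *
        generalize u (t + 1) = b at *
        generalize (-1 : A) ^ t = c at *
        linear_combination c * z * w * a * p * h1 - c * z * p * b * h2
    rw [sum_range_succ, mul_add, ← add_assoc, ih, sum_range_succ, key n le_rfl,
      prod_Ico_succ_top (Nat.zero_le n)]
    have h2 := hu n
    simp only [Ico_self, prod_empty]
    rw [show x ^ ((n + 1) * (n + 1 + 1)) = x ^ ((n + 1) ^ 2) * x ^ (n + 1) by ring,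
      show x ^ ((n + 1) * (n + 1)) = x ^ ((n + 1) ^ 2) by ring, pow_succ (-1) n]
    generalize ∏ k ∈ Ico 0 n, ((1 - x ^ (k + 1)) * u (k + 1)) = p
    generalize x ^ ((n + 1) ^ 2) = z at *
    generalize x ^ (n + 1) = w at *
    generalize u (n + 1) = a at *
    generalize (-1 : A) ^ n = c at *
    linear_combination (2 * c * z - p) * h2

theorem gauss_triangular_finite {A : Type*} [CommRing A] (x : A) (v : ℕ → A)
    (hv : ∀ k, v k * (1 - x ^ (2 * k + 1)) = 1) (n : ℕ) :
    1 + ∑ s ∈ range n, (x ^ ((s + 1) * (2 * s + 1)) + x ^ ((s + 1) * (2 * s + 3))) =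
      ∏ k ∈ Ico 0 n, ((1 - x ^ (2 * k + 2)) * v k) +
      ∑ s ∈ range n, x ^ ((s + 1) * (2 * n + 1)) *
        ∏ k ∈ Ico (s + 1) n, ((1 - x ^ (2 * k + 2)) * v k) := by
  induction n with
  | zero => simp
  | succ n ih =>
    have key : ∀ t ≤ n, ∑ s ∈ range t, x ^ ((s + 1) * (2 * (n + 1) + 1)) *
          ∏ k ∈ Ico (s + 1) (n + 1), ((1 - x ^ (2 * k + 2)) * v k) =
        ∑ s ∈ range t, x ^ ((s + 1) * (2 * n + 1)) *
          ∏ k ∈ Ico (s + 1) n, ((1 - x ^ (2 * k + 2)) * v k) -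
        x ^ (2 * n + 1) * (1 - x) * v n * ∏ k ∈ Ico 0 n, ((1 - x ^ (2 * k + 2)) * v k) +
        x ^ ((t + 1) * (2 * n + 1)) * (1 - x ^ (2 * t + 1)) * v n *
          ∏ k ∈ Ico t n, ((1 - x ^ (2 * k + 2)) * v k) := by
      intro t ht
      induction t with
      | zero => simp
      | succ t iht =>
        rw [sum_range_succ, sum_range_succ, iht (by omega), prod_Ico_succ_top ht,
          prod_eq_prod_Ico_succ_bot (show t < n by omega)]
        generalize ∏ k ∈ Ico (t + 1) n, ((1 - x ^ (2 * k + 2)) * v k) = p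
        have h1 := hv t
        have h2 := hv n
        rw [show x ^ ((t + 1) * (2 * (n + 1) + 1)) = x ^ ((t + 1) * (2 * n + 1)) * x ^ (2 * t + 2)
            by ring,
          show x ^ ((t + 1 + 1) * (2 * n + 1)) = x ^ ((t + 1) * (2 * n + 1)) * x ^ (2 * n + 1)
            by ring,
          show x ^ (2 * (t + 1) + 1) = x ^ (2 * t + 2) * x by ring,
          show x ^ (2 * n + 2) = x ^ (2 * n + 1) * x by ring]
        generalize x ^ ((t + 1) * (2 * n + 1)) = z at *
        generalize x ^ (2 * t + 2) = y at *
        generalize x ^ (2 * t + 1) = y' at *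
        generalize x ^ (2 * n + 1) = w at *
        linear_combination z * (1 - y) * v n * p * h1 + z * p * h2
    rw [sum_range_succ, ← add_assoc, ih, sum_range_succ, key n le_rfl,
      prod_Ico_succ_top (Nat.zero_le n)]
    have h2 := hv n
    simp only [Ico_self, prod_empty]
    rw [show x ^ ((n + 1) * (2 * (n + 1) + 1)) = x ^ ((n + 1) * (2 * n + 3)) by ring,
      show x ^ (2 * n + 2) = x ^ (2 * n + 1) * x by ring]
    generalize ∏ k ∈ Ico 0 n, ((1 - x ^ (2 * k + 2)) * v k) = p
    generalize x ^ ((n + 1) * (2 * n + 1)) = z at *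
    generalize x ^ (2 * n + 1) = w at *
    linear_combination - (z + p) * h2

theorem sum_Icc_neg_eq {M : Type*} [AddCommMonoid M] (g : ℤ → M) (n : ℕ) :
    ∑ k ∈ Icc (-n : ℤ) n, g k = g 0 + ∑ s ∈ range n, (g (s + 1) + g (-(s + 1))) := by
  induction n with
  | zero => simp
  | succ n ih =>
    have h : Icc (-(n + 1 : ℕ) : ℤ) (n + 1 : ℕ) =
        insert (n + 1 : ℤ) (insert (-(n + 1) : ℤ) (Icc (-n : ℤ) n)) := by
      ext k
      simp only [mem_insert, mem_Icc]
      omega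
    rw [h, sum_insert, sum_insert, ih, sum_range_succ]
    · abel
    · simp
    · simp only [mem_insert, mem_Icc]
      omega

theorem coeff_squareTheta_eq_coeff_sum {d n : ℕ} (h : d ≤ n) :
    coeff d squareTheta =
      coeff d (1 + 2 * ∑ s ∈ range n, (X : ℤ⟦X⟧) ^ ((s + 1) ^ 2)) := by
  rw [squareTheta, ← coeff_sum_X_pow_eq_coeff_fiberSeries (fun k => sq_nonneg k)
    (Icc (-n : ℤ) n), sum_Icc_neg_eq, mul_sum]
  · congr 2
    refine sum_congr rfl fun s _ => ?_
    rw [neg_sq, two_mul]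
    norm_cast
  · intro k hk
    rw [mem_Icc]
    rcases lt_trichotomy k 0 with h | h | h <;> constructor <;> nlinarith

theorem coeff_triangularTheta_eq_coeff_sum {d n : ℕ} (h : d ≤ n) :
    coeff d triangularTheta = coeff d (1 + ∑ s ∈ range n,
      ((X : ℤ⟦X⟧) ^ ((s + 1) * (2 * s + 1)) + X ^ ((s + 1) * (2 * s + 3)))) := by
  rw [triangularTheta, ← coeff_sum_X_pow_eq_coeff_fiberSeries two_mul_sq_add_self_nonneg
    (Icc (-n : ℤ) n), sum_Icc_neg_eq]
  · congr 2
    refine sum_congr rfl fun s _ => ?_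
    rw [add_comm]
    congr 2
    · rw [show 2 * (-(s + 1 : ℤ)) ^ 2 + -(s + 1 : ℤ) = ((s + 1) * (2 * s + 1) : ℕ) by
        push_cast; ring, Int.toNat_natCast]
    · rw [show 2 * (s + 1 : ℤ) ^ 2 + (s + 1 : ℤ) = ((s + 1) * (2 * s + 3) : ℕ) by
        push_cast; ring, Int.toNat_natCast]
  · intro k hk
    rw [mem_Icc]
    rcases lt_trichotomy k 0 with h | h | h <;> constructor <;> nlinarith

theorem coeff_eq_coeff_of_eq_add_of_X_pow_dvd {f g e : ℤ⟦X⟧} {d m : ℕ} (h : f = g + e)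
    (hd : d < m) (he : X ^ m ∣ e) : coeff d f = coeff d g := by
  rw [h, map_add, X_pow_dvd_iff.mp he d hd, add_zero]

/-- Inverse of a power series with constant coefficient `1`. -/
noncomputable def unitInv (f : ℤ⟦X⟧) : ℤ⟦X⟧ := invOfUnit f 1

theorem unitInv_mul {f : ℤ⟦X⟧} (h : constantCoeff f = 1) : unitInv f * f = 1 :=
  invOfUnit_mul f 1 h

theorem unitInv_one_add_mul (k : ℕ) :
    unitInv (1 + (-X) ^ (k + 1)) * (1 + (-X : ℤ⟦X⟧) ^ (k + 1)) = 1 :=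
  unitInv_mul (by simp)

theorem unitInv_one_sub_mul (k : ℕ) :
    unitInv (1 - X ^ (2 * k + 1)) * (1 - (X : ℤ⟦X⟧) ^ (2 * k + 1)) = 1 :=
  unitInv_mul (by simp)

theorem coeff_squareTheta_eq_coeff_prod {d n : ℕ} (h : d ≤ n) :
    coeff d squareTheta = coeff d (∏ k ∈ range n,
      ((1 - (-X : ℤ⟦X⟧) ^ (k + 1)) * unitInv (1 + (-X) ^ (k + 1)))) := by
  have hg := gauss_square_finite (-X : ℤ⟦X⟧) (fun k => unitInv (1 + (-X) ^ k))
    unitInv_one_add_mul n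
  rw [coeff_squareTheta_eq_coeff_sum h, range_eq_Ico]
  rw [range_eq_Ico] at hg
  refine coeff_eq_coeff_of_eq_add_of_X_pow_dvd (Eq.trans ?_ hg) (Nat.lt_succ_of_le h) ?_
  · congr 2
    refine sum_congr rfl fun s _ => ?_
    rw [neg_pow X, ← mul_assoc, ← pow_add, Even.neg_one_pow, one_mul]
    rw [show s + 1 + (s + 1) ^ 2 = (s + 1) * (s + 1 + 1) by ring]
    exact Nat.even_mul_succ_self _
  · refine Dvd.dvd.mul_left (dvd_sum fun s _ => ?_) _
    refine Dvd.dvd.mul_right (Dvd.dvd.mul_right (Dvd.dvd.mul_left ?_ _) _) _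
    rw [neg_pow X]
    exact Dvd.dvd.mul_left (pow_dvd_pow _ (Nat.le_mul_of_pos_left _ s.succ_pos)) _

theorem coeff_triangularTheta_eq_coeff_prod {d n : ℕ} (h : d ≤ n) :
    coeff d triangularTheta = coeff d (∏ k ∈ range n,
      ((1 - (X : ℤ⟦X⟧) ^ (2 * k + 2)) * unitInv (1 - X ^ (2 * k + 1)))) := by
  have hg := gauss_triangular_finite (X : ℤ⟦X⟧) (fun k => unitInv (1 - X ^ (2 * k + 1)))
    unitInv_one_sub_mul n
  rw [coeff_triangularTheta_eq_coeff_sum h, range_eq_Ico]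
  rw [range_eq_Ico] at hg
  refine coeff_eq_coeff_of_eq_add_of_X_pow_dvd hg (show d < 2 * n + 1 by omega) ?_
  exact dvd_sum fun s _ => Dvd.dvd.mul_right
    (pow_dvd_pow _ (Nat.le_mul_of_pos_left _ s.succ_pos)) _

/-- The signed weight of `c` copies of the part `i` in a partition with distinct even parts. -/
def pedWeight (i c : ℕ) : ℤ := if Even i → c ≤ 1 then (-1) ^ (c * i) else 0

theorem coeff_genFun_pedWeight (n : ℕ) :
    coeff n (Nat.Partition.genFun pedWeight) = (-1) ^ n * (ped n : ℤ) := by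
  classical
  rw [Nat.Partition.coeff_genFun, ped, Fintype.card_subtype, card_filter, Nat.cast_sum, mul_sum]
  refine sum_congr rfl fun p _ => ?_
  simp only [Finsupp.prod, Multiset.toFinsupp_support, Multiset.toFinsupp_apply]
  simp only [pedWeight]
  rw [prod_ite_zero, prod_pow_eq_pow_sum]
  have h : ∑ i ∈ p.parts.toFinset, p.parts.count i * i = n := by
    conv_rhs => rw [← p.parts_sum, sum_multiset_count]
    rfl
  rw [h]
  simp only [Multiset.mem_toFinset]
  split_ifs <;> simp

open scoped PowerSeries.WithPiTopology in
/-- The generating function of the multiples of a single part `i`, with weights `pedWeight`. -/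
noncomputable def pedFactor (i : ℕ) : ℤ⟦X⟧ :=
  1 + ∑' j, pedWeight i (j + 1) • (X : ℤ⟦X⟧) ^ (i * (j + 1))

open scoped PowerSeries.WithPiTopology in
theorem pedFactor_of_even {i : ℕ} (hi : Even i) : pedFactor i = 1 + X ^ i := by
  rw [pedFactor, tsum_eq_single 0]
  · simp [pedWeight, hi.neg_one_pow]
  · intro j hj
    rw [pedWeight, if_neg, zero_smul]
    intro h
    have := h hi
    omega

open scoped PowerSeries.WithPiTopology in
theorem pedFactor_mul_of_odd {i : ℕ} (hi : Odd i) : pedFactor i * (1 + X ^ i) = 1 := by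
  have h0 : constantCoeff (-X ^ i : ℤ⟦X⟧) = 0 := by
    simp [hi.pos.ne']
  have h : pedFactor i = ∑' j, (-X ^ i : ℤ⟦X⟧) ^ j := by
    rw [(WithPiTopology.summable_pow_of_constantCoeff_eq_zero h0).tsum_eq_zero_add, pow_zero,
      pedFactor]
    congr 2
    ext1 j
    rw [pedWeight, if_pos fun h => absurd h (Nat.not_even_iff_odd.mpr hi), neg_pow (X ^ i),
      mul_comm _ i, pow_mul (-1) i, hi.neg_one_pow, ← pow_mul, zsmul_eq_mul]
    push_cast
    rfl
  have := WithPiTopology.tsum_pow_mul_one_sub_of_constantCoeff_eq_zero h0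
  rwa [← h, sub_neg_eq_add] at this

theorem prod_pedFactor_mul_prod (n : ℕ) :
    (∏ k ∈ range (2 * n), pedFactor (k + 1)) * ∏ k ∈ range (2 * n),
      ((1 - (-X : ℤ⟦X⟧) ^ (k + 1)) * unitInv (1 + (-X) ^ (k + 1))) =
    ∏ k ∈ range n, ((1 - (X : ℤ⟦X⟧) ^ (2 * k + 2)) * unitInv (1 - X ^ (2 * k + 1))) := by
  induction n with
  | zero => simp
  | succ n ih =>
    rw [show 2 * (n + 1) = 2 * n + 1 + 1 by ring]
    simp only [prod_range_succ _ (2 * n), prod_range_succ _ (2 * n + 1), prod_range_succ _ n]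
    rw [← ih]
    have hodd : Odd (2 * n + 1) := odd_two_mul_add_one n
    have heven : Even (2 * n + 1 + 1) := hodd.add_one
    have h1 := pedFactor_mul_of_odd hodd
    have h2 := unitInv_one_add_mul (2 * n)
    have h3 := unitInv_one_add_mul (2 * n + 1)
    rw [hodd.neg_pow, ← sub_eq_add_neg] at h2
    rw [heven.neg_pow] at h3
    rw [pedFactor_of_even heven, hodd.neg_pow, heven.neg_pow, ← sub_eq_add_neg, sub_neg_eq_add]
    generalize (∏ k ∈ range (2 * n), pedFactor (k + 1)) = P
    generalize ∏ k ∈ range (2 * n),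
      ((1 - (-X : ℤ⟦X⟧) ^ (k + 1)) * unitInv (1 + (-X) ^ (k + 1))) = R
    generalize unitInv (1 - (X : ℤ⟦X⟧) ^ (2 * n + 1)) = u at *
    generalize unitInv (1 + (X : ℤ⟦X⟧) ^ (2 * n + 1 + 1)) = v at *
    generalize pedFactor (2 * n + 1) = w at *
    rw [show 2 * n + 2 = 2 * n + 1 + 1 by ring]
    generalize (X : ℤ⟦X⟧) ^ (2 * n + 1 + 1) = y at *
    generalize (X : ℤ⟦X⟧) ^ (2 * n + 1) = x at *
    linear_combination P * R * (1 - y) * u * (v * (1 + y) * h1 + h3)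

open scoped PowerSeries.WithPiTopology in
theorem genFun_pedWeight_mul_squareTheta :
    Nat.Partition.genFun pedWeight * squareTheta = triangularTheta := by
  have htop : Filter.Tendsto (fun n : ℕ => 2 * n) Filter.atTop Filter.atTop :=
    Filter.tendsto_atTop_mono (fun n => Nat.le_mul_of_pos_left n two_pos) Filter.tendsto_id
  have hQ : Filter.Tendsto (fun n => ∏ k ∈ range (2 * n), pedFactor (k + 1)) Filter.atTop
      (nhds (Nat.Partition.genFun pedWeight)) :=
    (Nat.Partition.hasProd_genFun pedWeight).tendsto_prod_nat.comp htop
  have hφ : Filter.Tendsto (fun n => ∏ k ∈ range (2 * n),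
      ((1 - (-X : ℤ⟦X⟧) ^ (k + 1)) * unitInv (1 + (-X) ^ (k + 1)))) Filter.atTop
      (nhds squareTheta) := by
    rw [WithPiTopology.tendsto_iff_coeff_tendsto]
    exact fun d => tendsto_atTop_of_eventually_const fun n (hn : n ≥ d) =>
      (coeff_squareTheta_eq_coeff_prod (by omega)).symm
  have hψ : Filter.Tendsto (fun n => ∏ k ∈ range n,
      ((1 - (X : ℤ⟦X⟧) ^ (2 * k + 2)) * unitInv (1 - X ^ (2 * k + 1)))) Filter.atTop
      (nhds triangularTheta) := by
    rw [WithPiTopology.tendsto_iff_coeff_tendsto]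
    exact fun d => tendsto_atTop_of_eventually_const fun n (hn : n ≥ d) =>
      (coeff_triangularTheta_eq_coeff_prod hn).symm
  refine tendsto_nhds_unique (hQ.mul hφ) ?_
  simpa only [prod_pedFactor_mul_prod] using hψ

theorem three_dvd_ped (n : ℕ) : 3 ∣ ped (9 * n + 7) := by
  have h := three_dvd_coeff_of_mul_squareTheta genFun_pedWeight_mul_squareTheta n
  rw [coeff_genFun_pedWeight] at h
  rcases neg_one_pow_eq_or ℤ (9 * n + 7) with h' | h' <;> rw [h'] at h <;> omega

theorem exists_ped_eq (n : ℕ) : ∃ c : ℤ, (ped (9 * n + 7) : ℤ) =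
    4 * coeff (3 * n + 2) (triangularTheta * expand 2 two_ne_zero triangularTheta) + 8 * c := by
  obtain ⟨c, hc⟩ := exists_coeff_eq_of_mul_squareTheta genFun_pedWeight_mul_squareTheta n
  rw [coeff_genFun_pedWeight] at hc
  generalize coeff (3 * n + 2) (triangularTheta * _) = F at *
  rcases neg_one_pow_eq_or ℤ (9 * n + 7) with h' | h' <;> rw [h'] at hc
  · exact ⟨c - 2 * F, by linarith⟩
  · exact ⟨F - c, by linarith⟩

theorem ped_9n_add_7_congr_225n_add_178 (n : ℕ) :
    ped (9 * n + 7) ≡ ped (225 * n + 178) [MOD 24] := by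
  obtain ⟨c, hc⟩ := exists_ped_eq n
  obtain ⟨c', hc'⟩ := exists_ped_eq (25 * n + 19)
  have h1 := three_dvd_ped n
  have h2 := three_dvd_ped (25 * n + 19)
  rw [show 3 * (25 * n + 19) + 2 = 25 * (3 * n + 2) + 9 by ring,
    coeff_triangularTheta_mul_expand_dilate] at hc'
  rw [show 9 * (25 * n + 19) + 7 = 225 * n + 178 by ring] at hc' h2
  rw [Nat.ModEq]
  omega
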